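/- For every 0 < h₀ < 1 there exists C > 0 such that ‖|D| F(hA) (hA+i)^{-1} u‖_{L²} ≤ C ‖|D| (hA+i)^{-1} u‖_{L²} for all u ∈ 𝒮(ℝ^d) and all 0 < h ≤ h₀, where F(λ) = arctan(λ). -/

import Mathlib

open MeasureTheory Filter Topology Complex
open scoped Real ENNReal FourierTransform ComplexConjugate

noncomputable section

/-- Euclidean space `ℝ^d`. -/
abbrev Ed (d : ℕ) : Type := EuclideanSpace ℝ (Fin d)

/-- `L²(ℝ^d)` with complex values. -/
abbrev L2 (d : ℕ) := MeasureTheory.Lp ℂ 2 (volume : Measure (Ed d))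

/-- The partial derivative `∂_j u`. -/
def pd (d : ℕ) (j : Fin d) (u : Ed d → ℂ) : Ed d → ℂ :=
  fun x => fderiv ℝ u x (EuclideanSpace.single j (1:ℝ))

/-- The operator `∑_{j,k} D_j (b_{jk} D_k) = - ∑_{j,k} ∂_j (b_{jk} ∂_k)` (complex
coefficients), applied to a function `u`. -/
def divGradC (d : ℕ) (b : Ed d → Fin d → Fin d → ℂ) (u : Ed d → ℂ) : Ed d → ℂ :=
  fun x => -∑ j : Fin d, ∑ k : Fin d,
    fderiv ℝ (fun y => b y j k * fderiv ℝ u y (EuclideanSpace.single k (1:ℝ))) x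
      (EuclideanSpace.single j (1:ℝ))

/-- `- div (G ∇ u) = ∑_{j,k} D_j (G_{jk} D_k) u` for a real coefficient matrix `G`. -/
def divGrad (d : ℕ) (G : Ed d → Fin d → Fin d → ℝ) (u : Ed d → ℂ) : Ed d → ℂ :=
  divGradC d (fun x j k => (G x j k : ℂ)) u

/-- The operation `a ↦ x·∇a` on real valued functions. -/
def xdotOp (d : ℕ) : (Ed d → ℝ) → Ed d → ℝ := fun a x => fderiv ℝ a x x

/-- The operation `a ↦ x·∇a` on complex valued functions. -/
def xdotC (d : ℕ) : (Ed d → ℂ) → Ed d → ℂ := fun a x => fderiv ℝ a x x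

/-- `a ∈ C_b^∞(ℝ^d)`: smooth with all derivatives bounded. -/
def CbSmooth (d : ℕ) (a : Ed d → ℝ) : Prop :=
  ContDiff ℝ (⊤ : ℕ∞) a ∧ ∀ n : ℕ, ∃ C : ℝ, ∀ x, ‖iteratedFDeriv ℝ n a x‖ ≤ C

/-- `a ∈ S_dil(ℝ^d)` : `a ∈ C_b^∞` and `(x·∇)^n a ∈ L^∞` for all `n`. -/
def MemSdil (d : ℕ) (a : Ed d → ℝ) : Prop :=
  CbSmooth d a ∧ ∀ n : ℕ, ∃ C : ℝ, ∀ x, |(xdotOp d)^[n] a x| ≤ C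

/-- Complex-valued version of `S_dil(ℝ^d)`. -/
def MemSdilC (d : ℕ) (a : Ed d → ℂ) : Prop :=
  (ContDiff ℝ (⊤ : ℕ∞) a ∧ ∀ n : ℕ, ∃ C : ℝ, ∀ x, ‖iteratedFDeriv ℝ n a x‖ ≤ C) ∧
  ∀ n : ℕ, ∃ C : ℝ, ∀ x, ‖(xdotC d)^[n] a x‖ ≤ C

/-- The coefficient matrix is symmetric with real entries. -/
def SymmetricCoef (d : ℕ) (G : Ed d → Fin d → Fin d → ℝ) : Prop := ∀ x j k, G x j k = G x k j

/-- Uniform ellipticity: `Λ₊ ≥ G(x) ≥ Λ₋ > 0` as quadratic forms. -/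
def UniformlyElliptic (d : ℕ) (G : Ed d → Fin d → Fin d → ℝ) : Prop :=
  ∃ lam Lam : ℝ, 0 < lam ∧ ∀ (x : Ed d) (v : Fin d → ℝ),
    lam * ∑ j, v j ^ 2 ≤ (∑ j, ∑ k, G x j k * v j * v k) ∧
      (∑ j, ∑ k, G x j k * v j * v k) ≤ Lam * ∑ j, v j ^ 2

/-- The standing assumptions of the paper: `G` symmetric with entries in `C_b^∞`,
uniformly elliptic. -/
def Standing (d : ℕ) (G : Ed d → Fin d → Fin d → ℝ) : Prop :=
  (∀ j k, CbSmooth d fun x => G x j k) ∧ SymmetricCoef d G ∧ UniformlyElliptic d G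

/-- `G = I_d + H`. -/
def Gmat (d : ℕ) (H : Ed d → Fin d → Fin d → ℝ) : Ed d → Fin d → Fin d → ℝ :=
  fun x j k => (if j = k then 1 else 0) + H x j k

/-- Long range condition `|∂^α (G - I_d)| ≤ C_α ⟨x⟩^{-μ-|α|}`. -/
def LongRange (d : ℕ) (G : Ed d → Fin d → Fin d → ℝ) (μ : ℝ) : Prop :=
  ∀ (j k : Fin d) (n : ℕ), ∃ C : ℝ, ∀ x : Ed d,
    ‖iteratedFDeriv ℝ n (fun y => G y j k - if j = k then (1:ℝ) else 0) x‖
      ≤ C * ((1 + ‖x‖ ^ 2) ^ (-(μ + n) / 2) : ℝ)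

/-- `R` is the resolvent `(P - z)⁻¹` of the self-adjoint realization of
`P = - div (G ∇·)`: for every `f ∈ L²`, `g = R f` solves `(P - z) g = f` in the sense
of distributions (this characterizes the resolvent uniquely). -/
def IsWeakResolvent (d : ℕ) (G : Ed d → Fin d → Fin d → ℝ) (z : ℂ)
    (R : L2 d →L[ℂ] L2 d) : Prop :=
  ∀ (f : L2 d) (φ : SchwartzMap (Ed d) ℂ),
    (∫ x, (R f) x * divGrad d G (⇑φ) x) - z * (∫ x, (R f) x * φ x) = ∫ x, f x * φ x

/-- The japanese bracket weight `⟨x⟩^s = (1+|x|²)^{s/2}`. -/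
def jweight (d : ℕ) (s : ℝ) : Ed d → ℝ := fun x => (1 + ‖x‖ ^ 2) ^ (s / 2)

/-- The dilation group `(e^{itA} u)(x) = e^{td/2} u(e^t x)`, where
`A = (x·∇ + ∇·x)/(2i)` is the generator of dilations. -/
def dil (d : ℕ) (t : ℝ) (u : Ed d → ℂ) : Ed d → ℂ :=
  fun x => (Real.exp (t * d / 2) : ℂ) * u (Real.exp t • x)

/-- The `L²` inner product of two functions (conjugate linear in the first variable,
as is Mathlib's convention). -/
def pairL2 (d : ℕ) (u v : Ed d → ℂ) : ℂ := ∫ x : Ed d, (starRingEnd ℂ) (u x) * v x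

/-- The resolvent `(hA - z)⁻¹ = (1/i) ∫₀^{±∞} e^{-itz} e^{ithA} dt` (`± Im z < 0`) of the
(rescaled) generator of dilations, realized by its defining integral formula. -/
def resDil (d : ℕ) (h : ℝ) (z : ℂ) (u : Ed d → ℂ) : Ed d → ℂ := fun x =>
  if z.im < 0 then
    Complex.I⁻¹ * ∫ t in Set.Ici (0:ℝ), Complex.exp (-(Complex.I * t * z)) * dil d (t * h) u x
  else
    -Complex.I⁻¹ * ∫ t in Set.Iic (0:ℝ), Complex.exp (-(Complex.I * t * z)) * dil d (t * h) u x

/-- `sin(τ A) u = (e^{iτA} - e^{-iτA}) u / (2i)`. -/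
def sinA (d : ℕ) (τ : ℝ) (u : Ed d → ℂ) : Ed d → ℂ :=
  fun x => (dil d τ u x - dil d (-τ) u x) / (2 * Complex.I)

/-- `F(hA) = arctan(hA)` realized through `arctan λ = ∫₀^∞ sin(tλ) e^{-t} dt / t`. -/
def arctanA (d : ℕ) (h : ℝ) (u : Ed d → ℂ) : Ed d → ℂ :=
  fun x => ∫ t in Set.Ioi (0:ℝ), ((Real.exp (-t) / t : ℝ) : ℂ) * sinA d (t * h) u x

/-- Coefficients of the commutator `i[P,A] = ∑ D_j (2G_{jk} - x·∇G_{jk}) D_k`. -/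
def commCoef (d : ℕ) (G : Ed d → Fin d → Fin d → ℝ) : Ed d → Fin d → Fin d → ℝ :=
  fun x j k => 2 * G x j k - xdotOp d (fun y => G y j k) x

/-- `P_τ = e^{-iτA} (i[P,A]) e^{iτA}` applied to a function. -/
def ptauFun (d : ℕ) (G : Ed d → Fin d → Fin d → ℝ) (τ : ℝ) (u : Ed d → ℂ) : Ed d → ℂ :=
  dil d (-τ) (divGrad d (commCoef d G) (dil d τ u))

/-- Coefficients of `P_τ = e^{-iτA} (i[P,A]) e^{iτA}` for `P = -div((I+H)∇)`;
indeed `e^{-iτA} (∑ D_j b D_k) e^{iτA} = e^{2τ} ∑ D_j b(e^{-τ}x) D_k`. -/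
def ptauCoef (d : ℕ) (H : Ed d → Fin d → Fin d → ℝ) (τ : ℝ) : Ed d → Fin d → Fin d → ℝ :=
  fun x j k => Real.exp (2 * τ) * commCoef d (Gmat d H) (Real.exp (-τ) • x) j k

/-- Coefficients of `Q_s = ∫₀¹ (d P_τ / dτ)|_{τ=σs} dσ`. -/
def qCoef (d : ℕ) (H : Ed d → Fin d → Fin d → ℝ) (s : ℝ) : Ed d → Fin d → Fin d → ℝ :=
  fun x j k => ∫ σ in (0:ℝ)..(1:ℝ), deriv (fun τ => ptauCoef d H τ x j k) (σ * s)

/-- Coefficients of `B_τ = τ ∫₀¹ s Q_{sτ} ds`. -/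
def bCoef (d : ℕ) (H : Ed d → Fin d → Fin d → ℝ) (τ : ℝ) : Ed d → Fin d → Fin d → ℝ :=
  fun x j k => τ * ∫ s in (0:ℝ)..(1:ℝ), s * qCoef d H (s * τ) x j k

/-- The Fourier multiplier `|D|` (with symbol `|ξ|`). -/
def absD (d : ℕ) (u : Ed d → ℂ) : Ed d → ℂ :=
  fun x => 𝓕⁻ (fun ξ : Ed d => (‖ξ‖ : ℂ) * 𝓕 u ξ) x

/-- `‖ |D| w ‖_{L²}`, computed on the Fourier side (Plancherel). -/
def Dnorm (d : ℕ) (w : Ed d → ℂ) : ℝ :=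
  (eLpNorm (fun ξ : Ed d => (‖ξ‖ : ℂ) * 𝓕 w ξ) 2 volume).toReal

/-- A general Fourier multiplier `ρ(D)`. -/
def multD (d : ℕ) (ρ : Ed d → ℂ) (u : Ed d → ℂ) : Ed d → ℂ :=
  fun x => 𝓕⁻ (fun ξ : Ed d => ρ ξ * 𝓕 u ξ) x

/-- The operator `A = (x·∇ + ∇·x)/(2i) = (x·∇ + d/2)/i` applied to a function. -/
def opA (d : ℕ) (u : Ed d → ℂ) : Ed d → ℂ :=
  fun x => (fderiv ℝ u x x + (d / 2 : ℂ) * u x) / Complex.I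

/-- The functions `F_ν(λ) = ∫₀^∞ sin(tλ) t/(t²+ν²) e^{-t} dt` approximating `arctan`. -/
def Fnu (ν lam : ℝ) : ℝ :=
  ∫ t in Set.Ioi (0:ℝ), Real.sin (t * lam) * (t / (t ^ 2 + ν ^ 2)) * Real.exp (-t)

/-- `m`-admissible family in `S_dil(ℝ^d)`:
`‖∂_τ^k (x·∇)^n b_τ‖_{L^∞} ≤ C_{kn} e^{m|τ|}` for all `k, n`. -/
def AdmissibleCoeff (d : ℕ) (m : ℕ) (b : ℝ → Ed d → ℂ) : Prop :=
  (∀ τ, MemSdilC d (b τ)) ∧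
  (∀ (n : ℕ) (x : Ed d), ContDiff ℝ (⊤ : ℕ∞) fun τ => (xdotC d)^[n] (b τ) x) ∧
  ∀ k n : ℕ, ∃ C : ℝ, ∀ (τ : ℝ) (x : Ed d),
    ‖iteratedDeriv k (fun σ => (xdotC d)^[n] (b σ) x) τ‖ ≤ C * Real.exp (m * |τ|)

/-- `m`-admissible family of differential operators `B_τ = ∑ D_j b_{jk,τ} D_k`. -/
def AdmissibleOp (d : ℕ) (m : ℕ) (B : ℝ → Ed d → Fin d → Fin d → ℂ) : Prop :=
  ∀ j k, AdmissibleCoeff d m fun τ x => B τ x j k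

/-- Functions that are continuous and bounded on `[0,∞)` (the spectrum of `P`). -/
def GoodSymbol (φ : ℝ → ℂ) : Prop :=
  Continuous φ ∧ ∃ C : ℝ, ∀ lam : ℝ, 0 ≤ lam → ‖φ lam‖ ≤ C

/-- The (continuous bounded) functional calculus `φ ↦ φ(P)` of the nonnegative
self-adjoint operator `P = -div(G∇)`, characterized by: it is linear and
multiplicative on continuous functions bounded on `[0,∞) ⊇ spec(P)`, compatible with
sup-norm bounds and adjoints, only depends on the restriction of the symbol to
`[0,∞)`, and sends `λ ↦ (λ - z)⁻¹` to the resolvent `(P - z)⁻¹`.  These properties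
determine `φ(P)` uniquely for every `φ` continuous and vanishing at infinity.
Moreover `0` is not an eigenvalue of `P` (field `ker_triv`). -/
structure SpectralCalc (d : ℕ) (G : Ed d → Fin d → Fin d → ℝ) where
  map : (ℝ → ℂ) → (L2 d →L[ℂ] L2 d)
  map_congr : ∀ φ ψ, GoodSymbol φ → GoodSymbol ψ →
    (∀ lam : ℝ, 0 ≤ lam → φ lam = ψ lam) → map φ = map ψ
  map_add : ∀ φ ψ, GoodSymbol φ → GoodSymbol ψ →
    map (fun lam => φ lam + ψ lam) = map φ + map ψ
  map_smul : ∀ (c : ℂ) φ, GoodSymbol φ → map (fun lam => c * φ lam) = c • map φ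
  map_mul : ∀ φ ψ, GoodSymbol φ → GoodSymbol ψ →
    map (fun lam => φ lam * ψ lam) = (map φ).comp (map ψ)
  map_norm : ∀ (φ) (C : ℝ), (∀ lam : ℝ, 0 ≤ lam → ‖φ lam‖ ≤ C) → ‖map φ‖ ≤ C
  map_star : ∀ φ, GoodSymbol φ →
    ContinuousLinearMap.adjoint (map φ) = map (fun lam => (starRingEnd ℂ) (φ lam))
  map_resolvent : ∀ z : ℂ, z.im ≠ 0 →
    IsWeakResolvent d G z (map fun lam => ((lam : ℂ) - z)⁻¹)
  ker_triv : ∀ f : L2 d,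
    (∀ φ : SchwartzMap (Ed d) ℂ, (∫ x, f x * divGrad d G (⇑φ) x) = 0) → f = 0

/-- `Rj = ∂_j P^{-1/2}` is the `j`-th Riesz transform of `P`, defined as the strong
limit `s-lim_n π^{-1/2} ∂_j ∫_{1/n}^n e^{-tP} dt/√t`; here `gn n` is the vector
integral `∫_{1/n}^n e^{-tP} f dt/√t` and `wn n` is its distributional `∂_j`
derivative. -/
def RieszOf (d : ℕ) (G : Ed d → Fin d → Fin d → ℝ) (S : SpectralCalc d G) (j : Fin d)
    (Rj : L2 d →L[ℂ] L2 d) : Prop :=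
  ∀ (f : L2 d) (gn wn : ℕ → L2 d),
    (∀ n : ℕ, gn n = ∫ t in Set.Icc ((n : ℝ)⁻¹) (n : ℝ),
        ((Real.sqrt t)⁻¹ : ℝ) • (S.map (fun lam => Complex.exp (-(t : ℂ) * ((max lam 0 : ℝ) : ℂ))) f)) →
    (∀ (n : ℕ) (φ : SchwartzMap (Ed d) ℂ),
        (∫ x, (wn n) x * φ x) = -∫ x, (gn n) x * pd d j (⇑φ) x) →
    Tendsto (fun n : ℕ => ((Real.sqrt Real.pi)⁻¹ : ℝ) • wn n) atTop (𝓝 (Rj f))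

/-!
Both `(hA + i)⁻¹` and `arctan(hA) (hA + i)⁻¹` are averages `∫ k(r) e^{irhA} dr` over the dilation
group, the second kernel being obtained from the first through
`arctan λ = ∫₀^∞ sin(tλ) e^{-t} dt / t`. The Fourier transform turns `e^{isA}` into `e^{-isA}`, and
commuting `|ξ|` past the average multiplies the kernel by `e^{hr}`, i.e. shifts the spectral
parameter by `ih`. On each ray, in the coordinate `ξ = e^{hy} ω`, the average is a convolution
on `ℝ`, so Plancherel's theorem on `ℝ` reduces the claim to the boundedness of the analytic
continuation of `arctan` to the strip `|Im w| ≤ h < 1`.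
-/

open ContinuousLinearMap (mul)
open scoped Convolution

/-! ### Plancherel's theorem and convolutions -/

section Plancherel

variable {V : Type*} [NormedAddCommGroup V] [InnerProductSpace ℝ V] [MeasurableSpace V]
  [BorelSpace V] [FiniteDimensional ℝ V]

lemma integral_fourier_mul_eq_integral_mul_fourier {f g : V → ℂ} (hf : Integrable f)
    (hg : Integrable g) : ∫ ξ, 𝓕 f ξ * g ξ = ∫ x, f x * 𝓕 g x := by
  simpa only [flip_innerₗ, smul_eq_mul] using!
    VectorFourier.integral_fourierIntegral_smul_eq_flip (L := innerₗ V)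
      Real.continuous_fourierChar continuous_inner hf hg

lemma continuous_fourier_of_integrable {f : V → ℂ} (hf : Integrable f) : Continuous (𝓕 f) :=
  VectorFourier.fourierIntegral_continuous Real.continuous_fourierChar continuous_inner hf

lemma fourier_eq_zero_of_not_integrable {f : V → ℂ} (hf : ¬Integrable f) : 𝓕 f = 0 := by
  ext ξ
  rw [Real.fourier_eq]
  exact integral_undef fun h => hf ((Real.fourierIntegral_convergent_iff ξ).1 h)

lemma ae_eq_of_integral_mul_schwartzMap_eq {f g : V → ℂ} (hf : LocallyIntegrable f)
    (hg : LocallyIntegrable g)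
    (h : ∀ φ : SchwartzMap V ℂ, ∫ x, f x * φ x = ∫ x, g x * φ x) : f =ᵐ[volume] g := by
  refine ae_eq_of_integral_contDiff_smul_eq hf hg fun φ hφ hφ_supp => ?_
  have hsupp : HasCompactSupport (fun x => (φ x : ℂ)) :=
    hφ_supp.comp_left (g := fun r : ℝ => (r : ℂ)) Complex.ofReal_zero
  have hpair : ∫ x, f x * φ x = ∫ x, g x * φ x :=
    h (hsupp.toSchwartzMap (Complex.ofRealCLM.contDiff.comp hφ))
  simpa only [Complex.real_smul, mul_comm] using hpair

lemma fourier_ae_eq_coeFn_fourier_toLp {f : V → ℂ} (hf : Integrable f)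
    (hf₂ : MemLp f 2 (volume : Measure V)) :
    𝓕 f =ᵐ[volume] (𝓕 (hf₂.toLp f) : Lp ℂ 2 (volume : Measure V)) := by
  refine ae_eq_of_integral_mul_schwartzMap_eq
    (continuous_fourier_of_integrable hf).locallyIntegrable
    ((Lp.memLp _).locallyIntegrable (by norm_num)) fun φ => ?_
  have hdistr := congrArg (· φ) (Lp.fourier_toTemperedDistribution_eq (hf₂.toLp f))
  simp only [TemperedDistribution.fourier_apply, Lp.toTemperedDistribution_apply,
    smul_eq_mul] at hdistr
  calc ∫ ξ, 𝓕 f ξ * φ ξ = ∫ x, f x * 𝓕 (⇑φ) x :=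
        integral_fourier_mul_eq_integral_mul_fourier hf φ.integrable
    _ = ∫ x, (𝓕 φ) x * hf₂.toLp f x := by
        refine integral_congr_ae ?_
        filter_upwards [hf₂.coeFn_toLp] with x hx
        rw [hx, SchwartzMap.fourier_coe, mul_comm]
    _ = ∫ ξ, (𝓕 (hf₂.toLp f) : Lp ℂ 2 (volume : Measure V)) ξ * φ ξ := by
        rw [hdistr]
        simp only [mul_comm]

lemma eLpNorm_fourier_eq {f : V → ℂ} (hf : Integrable f) (hf₂ : MemLp f 2 (volume : Measure V)) :
    eLpNorm (𝓕 f) 2 volume = eLpNorm f 2 volume := by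
  have hnorm : ‖(𝓕 (hf₂.toLp f) : Lp ℂ 2 (volume : Measure V))‖ₑ = ‖hf₂.toLp f‖ₑ := by
    rw [← ofReal_norm, Lp.norm_fourier_eq, ofReal_norm]
  rw [eLpNorm_congr_ae (fourier_ae_eq_coeFn_fourier_toLp hf hf₂), ← Lp.enorm_def, hnorm,
    Lp.enorm_def]
  exact eLpNorm_congr_ae hf₂.coeFn_toLp

lemma fourier_const_mul (a : ℂ) (f : V → ℂ) (ξ : V) : 𝓕 (fun x => a * f x) ξ = a * 𝓕 f ξ :=
  congrFun (VectorFourier.fourierIntegral_const_smul Real.fourierChar volume (innerₗ V) f a) ξ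

lemma fourier_sub {f g : V → ℂ} (hf : Integrable f) (hg : Integrable g) (ξ : V) :
    𝓕 (fun x => f x - g x) ξ = 𝓕 f ξ - 𝓕 g ξ := by
  simp only [Real.fourier_eq, smul_sub]
  exact integral_sub ((Real.fourierIntegral_convergent_iff ξ).2 hf)
    ((Real.fourierIntegral_convergent_iff ξ).2 hg)

lemma fourier_integral_comm {T : Type*} [MeasurableSpace T] {μ : Measure T} [SFinite μ]
    {f : T → V → ℂ} (hf : Integrable (Function.uncurry f) (μ.prod volume)) (η : V) :
    𝓕 (fun x => ∫ t, f t x ∂μ) η = ∫ t, 𝓕 (f t) η ∂μ := by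
  have hchar : Continuous fun x : V => (Real.fourierChar (-inner ℝ x η) : ℂ) :=
    continuous_subtype_val.comp (Real.continuous_fourierChar.comp (by fun_prop))
  have hint : Integrable (Function.uncurry fun t x =>
      (Real.fourierChar (-inner ℝ x η) : ℂ) * f t x) (μ.prod volume) :=
    hf.bdd_mul (c := 1) hchar.aestronglyMeasurable.comp_snd
      (.of_forall fun p => (Circle.norm_coe _).le)
  simp only [Real.fourier_eq, Circle.smul_def, smul_eq_mul]
  rw [integral_integral_swap hint]
  exact integral_congr_ae (.of_forall fun x => (integral_const_mul _ _).symm)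

lemma memLp_two_of_integrable_of_bound {α : Type*} [MeasurableSpace α] {μ : Measure α} {f : α → ℂ}
    {B : ℝ} (hf : Integrable f μ) (hB : ∀ x, ‖f x‖ ≤ B) : MemLp f 2 μ := by
  rw [memLp_two_iff_integrable_sq_norm hf.1]
  refine (hf.norm.const_mul B).mono' (hf.1.norm.pow 2) (.of_forall fun x => ?_)
  rw [Real.norm_of_nonneg (by positivity), sq]
  exact mul_le_mul_of_nonneg_right (hB x) (norm_nonneg _)

lemma memLp_two_convolution_mul {k g : V → ℂ} {B : ℝ} (hk : Integrable k) (hg : Integrable g)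
    (hB : ∀ x, ‖g x‖ ≤ B) : MemLp (k ⋆[mul ℂ ℂ] g) 2 (volume : Measure V) := by
  refine memLp_two_of_integrable_of_bound (B := (∫ x, ‖k x‖) * B)
    (hk.integrable_convolution (mul ℂ ℂ) hg) fun x => ?_
  rw [convolution_def, ← integral_mul_const]
  refine norm_integral_le_of_norm_le (hk.norm.mul_const B) (.of_forall fun y => ?_)
  rw [ContinuousLinearMap.mul_apply', norm_mul]
  gcongr
  exact hB _

lemma eLpNorm_convolution_le_of_norm_fourier_le {k₁ k₂ g : V → ℂ} {B C : ℝ}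
    (hk₁ : Integrable k₁) (hk₂ : Integrable k₂) (hg : Integrable g) (hB : ∀ x, ‖g x‖ ≤ B)
    (h : ∀ ξ, ‖𝓕 k₁ ξ‖ ≤ C * ‖𝓕 k₂ ξ‖) :
    eLpNorm (k₁ ⋆[mul ℂ ℂ] g) 2 volume ≤
      ENNReal.ofReal C * eLpNorm (k₂ ⋆[mul ℂ ℂ] g) 2 volume := by
  rw [← eLpNorm_fourier_eq (hk₁.integrable_convolution _ hg) (memLp_two_convolution_mul hk₁ hg hB),
    ← eLpNorm_fourier_eq (hk₂.integrable_convolution _ hg) (memLp_two_convolution_mul hk₂ hg hB)]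
  refine eLpNorm_le_mul_eLpNorm_of_ae_le_mul (.of_forall fun ξ => ?_) 2
  rw [Real.fourier_mul_convolution_eq hk₁ hg, Real.fourier_mul_convolution_eq hk₂ hg, norm_mul,
    norm_mul, ← mul_assoc]
  gcongr
  exact h ξ

end Plancherel

/-! ### Logarithmic polar coordinates -/

lemma lintegral_Ioi_eq_lintegral_exp_mul {c : ℝ} (hc : 0 < c) (F : ℝ → ℝ≥0∞) :
    ∫⁻ r in Set.Ioi 0, F r =
      ∫⁻ y : ℝ, ENNReal.ofReal (c * Real.exp (c * y)) * F (Real.exp (c * y)) := by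
  have hrange : Set.range (fun y : ℝ => Real.exp (c * y)) = Set.Ioi 0 := by
    rw [← Real.range_exp]
    exact (mul_left_surjective₀ hc.ne').range_comp Real.exp
  have hderiv (y : ℝ) : HasDerivAt (fun y : ℝ => Real.exp (c * y)) (c * Real.exp (c * y)) y := by
    simpa [mul_comm] using ((hasDerivAt_id y).const_mul c).exp
  have hinj : Function.Injective fun y : ℝ => Real.exp (c * y) :=
    Real.exp_injective.comp (mul_right_injective₀ hc.ne')
  rw [← hrange, ← Set.image_univ, lintegral_image_eq_lintegral_abs_deriv_mul MeasurableSet.univ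
    (fun y _ => (hderiv y).hasDerivWithinAt) hinj.injOn, Measure.restrict_univ]
  simp only [abs_of_pos (mul_pos hc (Real.exp_pos _))]

section Polar

variable {E : Type*} [NormedAddCommGroup E] [NormedSpace ℝ E] [FiniteDimensional ℝ E]
  [Nontrivial E] [MeasurableSpace E] [BorelSpace E] (μ : Measure E) [μ.IsAddHaarMeasure]

lemma lintegral_eq_lintegral_toSphere_Ioi {F : E → ℝ≥0∞} (hF : Measurable F) :
    ∫⁻ x, F x ∂μ = ∫⁻ ω : Metric.sphere (0 : E) 1, ∫⁻ r in Set.Ioi (0 : ℝ),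
      ENNReal.ofReal (r ^ (Module.finrank ℝ E - 1)) * F (r • (ω : E)) ∂volume ∂μ.toSphere := by
  have hpolar (x : ({0}ᶜ : Set E)) : F ((homeomorphUnitSphereProd E x).2.1 •
      (homeomorphUnitSphereProd E x).1.1) = F x := by
    rw [← homeomorphUnitSphereProd_symm_apply_coe, Homeomorph.symm_apply_apply]
  have hmeas : Measurable fun p : Metric.sphere (0 : E) 1 × Set.Ioi (0 : ℝ) =>
      F (p.2.1 • p.1.1) := by fun_prop
  calc ∫⁻ x, F x ∂μ = ∫⁻ x : ({0}ᶜ : Set E), F x ∂μ.comap (↑) := by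
        rw [lintegral_subtype_comap (measurableSet_singleton 0).compl, restrict_compl_singleton]
    _ = ∫⁻ p, F (p.2.1 • p.1.1)
          ∂(μ.toSphere.prod (Measure.volumeIoiPow (Module.finrank ℝ E - 1))) := by
        rw [← μ.measurePreserving_homeomorphUnitSphereProd.lintegral_comp_emb
          (Homeomorph.measurableEmbedding _)]
        simp only [hpolar]
    _ = _ := by
        rw [lintegral_prod _ hmeas.aemeasurable]
        refine lintegral_congr fun ω => ?_
        rw [Measure.volumeIoiPow,
          lintegral_withDensity_eq_lintegral_mul _ (by fun_prop) (by fun_prop),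
          ← lintegral_subtype_comap measurableSet_Ioi]
        rfl

lemma lintegral_eq_lintegral_toSphere_exp {c : ℝ} (hc : 0 < c) {F : E → ℝ≥0∞}
    (hF : Measurable F) :
    ∫⁻ x, F x ∂μ = ∫⁻ ω : Metric.sphere (0 : E) 1, ∫⁻ y : ℝ,
      ENNReal.ofReal (c * Real.exp (c * y) ^ Module.finrank ℝ E) * F (Real.exp (c * y) • (ω : E))
        ∂volume ∂μ.toSphere := by
  rw [lintegral_eq_lintegral_toSphere_Ioi μ hF]
  refine lintegral_congr fun ω => ?_
  rw [lintegral_Ioi_eq_lintegral_exp_mul hc]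
  refine lintegral_congr fun y => ?_
  rw [← mul_assoc, ← ENNReal.ofReal_mul (by positivity), mul_assoc c, ← pow_succ',
    Nat.sub_add_cancel Module.finrank_pos]

end Polar

lemma eLpNorm_two_sq_eq_lintegral {α : Type*} [MeasurableSpace α] (μ : Measure α) (f : α → ℂ) :
    eLpNorm f 2 μ ^ 2 = ∫⁻ x, ‖f x‖ₑ ^ 2 ∂μ := by
  simpa only [NNReal.coe_ofNat, ENNReal.coe_ofNat, ENNReal.rpow_ofNat] using
    eLpNorm_nnreal_pow_eq_lintegral (μ := μ) (f := f) (p := 2) two_ne_zero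

lemma integrable_exp_neg_mul_abs {c : ℝ} (hc : 0 < c) :
    Integrable fun y : ℝ => Real.exp (-(c * |y|)) := by
  rw [← integrableOn_univ, ← Set.Iic_union_Ioi (a := (0 : ℝ)), integrableOn_union]
  constructor
  · refine (integrableOn_exp_mul_Iic hc 0).congr_fun (fun y hy => ?_) measurableSet_Iic
    simp only [abs_of_nonpos (Set.mem_Iic.1 hy), mul_neg, neg_neg]
  · refine (exp_neg_integrableOn_Ioi 0 hc).congr_fun (fun y hy => ?_) measurableSet_Ioi
    simp only [abs_of_pos (Set.mem_Ioi.1 hy), neg_mul]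

lemma exists_exp_mul_norm_schwartzMap_exp_smul_le {V : Type*} [NormedAddCommGroup V]
    [NormedSpace ℝ V] (u : SchwartzMap V ℂ) {x : V} (hx : x ≠ 0) {a b : ℝ} (hba : b ≤ a) :
    ∃ B, ∀ s : ℝ, Real.exp (a * s) * ‖u (Real.exp s • x)‖ ≤ B * Real.exp (-(b * |s|)) := by
  set n := ⌈a + b⌉₊
  obtain ⟨C₀, hC₀, h₀⟩ := u.decay 0 0
  obtain ⟨C₁, hC₁, h₁⟩ := u.decay n 0
  simp only [pow_zero, one_mul, norm_iteratedFDeriv_zero] at h₀ h₁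
  have hxn : 0 < ‖x‖ ^ n := pow_pos (norm_pos_iff.2 hx) n
  refine ⟨C₀ + C₁ / ‖x‖ ^ n, fun s => ?_⟩
  rcases le_total 0 s with hs | hs
  · have hdecay : Real.exp (n * s) * ‖u (Real.exp s • x)‖ ≤ C₁ / ‖x‖ ^ n := by
      rw [le_div_iff₀ hxn, Real.exp_nat_mul]
      have := h₁ (Real.exp s • x)
      rw [norm_smul, Real.norm_of_nonneg (Real.exp_nonneg s), mul_pow] at this
      linarith
    have hexp : Real.exp (a * s) ≤ Real.exp (n * s) * Real.exp (-(b * |s|)) := by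
      rw [← Real.exp_add, Real.exp_le_exp, abs_of_nonneg hs]
      nlinarith [Nat.le_ceil (a + b)]
    calc Real.exp (a * s) * ‖u (Real.exp s • x)‖
        ≤ Real.exp (n * s) * Real.exp (-(b * |s|)) * ‖u (Real.exp s • x)‖ := by gcongr
      _ = Real.exp (n * s) * ‖u (Real.exp s • x)‖ * Real.exp (-(b * |s|)) := by ring
      _ ≤ (C₀ + C₁ / ‖x‖ ^ n) * Real.exp (-(b * |s|)) := by gcongr; linarith
  · have hexp : Real.exp (a * s) ≤ Real.exp (-(b * |s|)) := by
      rw [Real.exp_le_exp, abs_of_nonpos hs]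
      nlinarith
    calc Real.exp (a * s) * ‖u (Real.exp s • x)‖
        ≤ Real.exp (-(b * |s|)) * C₀ := by gcongr; exact h₀ _
      _ = C₀ * Real.exp (-(b * |s|)) := mul_comm _ _
      _ ≤ (C₀ + C₁ / ‖x‖ ^ n) * Real.exp (-(b * |s|)) := by
        gcongr
        exact le_add_of_nonneg_right (by positivity)

/-! ### The arctangent on a strip -/

section ArctanSymbol

lemma abs_sin_mul_div_le (t l : ℝ) : |Real.sin (t * l) / t| ≤ |l| := by
  rcases eq_or_ne t 0 with rfl | ht
  · simp
  · rw [abs_div, div_le_iff₀ (abs_pos.2 ht), mul_comm, ← abs_mul]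
    exact Real.abs_sin_le_abs

lemma integrableOn_exp_neg_mul_sin_div {a : ℝ} (ha : 0 < a) (l : ℝ) :
    IntegrableOn (fun t : ℝ => Real.exp (-a * t) * (Real.sin (t * l) / t)) (Set.Ioi 0) := by
  refine ((exp_neg_integrableOn_Ioi 0 ha).mul_const |l|).mono'
    (Measurable.aestronglyMeasurable (by fun_prop)) (.of_forall fun t => ?_)
  rw [norm_mul, Real.norm_of_nonneg (Real.exp_nonneg _)]
  exact mul_le_mul_of_nonneg_left (abs_sin_mul_div_le t l) (Real.exp_nonneg _)

lemma integral_exp_neg_mul_cos {a : ℝ} (ha : 0 < a) (l : ℝ) :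
    ∫ t in Set.Ioi (0 : ℝ), Real.exp (-a * t) * Real.cos (t * l) = a / (a ^ 2 + l ^ 2) := by
  have hre : (-(a : ℂ) + l * I).re < 0 := by simpa using ha
  have hexp (t : ℝ) : RCLike.re (Complex.exp ((-(a : ℂ) + l * I) * t)) =
      Real.exp (-a * t) * Real.cos (t * l) := by
    simp [Complex.exp_re, mul_comm]
  have hint := integral_re (integrableOn_exp_mul_complex_Ioi hre 0)
  simp only [hexp, integral_exp_mul_complex_Ioi hre] at hint
  have hnormSq : normSq (-(a : ℂ) + l * I) = a ^ 2 + l ^ 2 := by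
    simp [normSq_apply, sq]
  rw [hint, RCLike.re_to_complex, div_re, hnormSq]
  simp

lemma hasDerivAt_integral_exp_neg_mul_sin_div {a : ℝ} (ha : 0 < a) (l : ℝ) :
    HasDerivAt (fun l => ∫ t in Set.Ioi (0 : ℝ), Real.exp (-a * t) * (Real.sin (t * l) / t))
      (a / (a ^ 2 + l ^ 2)) l := by
  rw [← integral_exp_neg_mul_cos ha l]
  refine (hasDerivAt_integral_of_dominated_loc_of_deriv_le (s := Set.univ)
    (F' := fun l t => Real.exp (-a * t) * Real.cos (t * l))
    (bound := fun t => Real.exp (-a * t)) univ_mem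
    (.of_forall fun l => (integrableOn_exp_neg_mul_sin_div ha l).1)
    (integrableOn_exp_neg_mul_sin_div ha l) (Measurable.aestronglyMeasurable (by fun_prop))
    (.of_forall fun t l _ => ?_) (exp_neg_integrableOn_Ioi 0 ha) ?_).2
  · rw [norm_mul, Real.norm_of_nonneg (Real.exp_nonneg _)]
    exact mul_le_of_le_one_right (Real.exp_nonneg _) (Real.abs_cos_le_one _)
  · filter_upwards [ae_restrict_mem measurableSet_Ioi] with t ht l _
    have hsin : HasDerivAt (fun l => Real.sin (t * l) / t) (Real.cos (t * l) * (t * 1) / t) l :=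
      (((hasDerivAt_id l).const_mul t).sin).div_const t
    rw [mul_one, mul_div_cancel_right₀ _ (ne_of_gt ht)] at hsin
    exact hsin.const_mul _

lemma integral_exp_neg_mul_sin_div {a : ℝ} (ha : 0 < a) (l : ℝ) :
    ∫ t in Set.Ioi (0 : ℝ), Real.exp (-a * t) * (Real.sin (t * l) / t) = Real.arctan (l / a) := by
  have hderiv (l : ℝ) : HasDerivAt (fun l => (∫ t in Set.Ioi (0 : ℝ),
      Real.exp (-a * t) * (Real.sin (t * l) / t)) - Real.arctan (l / a)) 0 l := by
    have hval : 1 / (1 + (l / a) ^ 2) * (1 / a) = a / (a ^ 2 + l ^ 2) := by field_simp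
    have harctan : HasDerivAt (fun l => Real.arctan (l / a)) (a / (a ^ 2 + l ^ 2)) l :=
      hval ▸ ((hasDerivAt_id l).div_const a).arctan
    simpa only [sub_self] using (hasDerivAt_integral_exp_neg_mul_sin_div ha l).fun_sub harctan
  have hconst := is_const_of_deriv_eq_zero (fun l => (hderiv l).differentiableAt)
    (fun l => (hderiv l).deriv) l 0
  simpa [sub_eq_zero] using hconst

lemma norm_sin_sub_sin_re_le (w : ℂ) : ‖sin w - sin w.re‖ ≤ Real.exp |w.im| - 1 := by
  have hexp (x : ℝ) : ‖Complex.exp x - 1‖ ≤ Real.exp |x| - 1 := by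
    simpa using Complex.norm_exp_sub_sum_le_exp_norm_sub_sum x 1
  have hsin : sin w - sin w.re = (Complex.exp ((-w.re : ℝ) * I) * (Complex.exp w.im - 1)
      - Complex.exp ((w.re : ℝ) * I) * (Complex.exp (-w.im : ℝ) - 1)) * I / 2 := by
    have h₁ : -w * I = (-w.re : ℝ) * I + w.im := by
      conv_lhs => rw [← re_add_im w]
      push_cast
      linear_combination (-w.im : ℂ) * I_mul_I
    have h₂ : w * I = w.re * I + (-w.im : ℝ) := by
      conv_lhs => rw [← re_add_im w]
      push_cast
      linear_combination (w.im : ℂ) * I_mul_I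
    rw [Complex.sin, Complex.sin, h₁, h₂, Complex.exp_add, Complex.exp_add]
    push_cast
    ring
  rw [hsin, norm_div, norm_mul, norm_I, mul_one, Complex.norm_ofNat, div_le_iff₀ two_pos]
  calc _ ≤ ‖Complex.exp w.im - 1‖ + ‖Complex.exp (-w.im : ℝ) - 1‖ := by
        refine (norm_sub_le _ _).trans_eq ?_
        rw [norm_mul, norm_mul, norm_exp_ofReal_mul_I, norm_exp_ofReal_mul_I, one_mul, one_mul]
    _ ≤ (Real.exp |w.im| - 1) * 2 := by
        have := hexp (-w.im)
        rw [abs_neg] at this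
        linarith [hexp w.im]

/-- The holomorphic extension of `Real.arctan` to the strip `|Im w| < 1`, given by the Laplace
transform formula through which `arctanA` encodes `arctan (hA)`. -/
def arctanSymbol (w : ℂ) : ℂ :=
  ∫ t in Set.Ioi (0 : ℝ), ((Real.exp (-t) / t : ℝ) : ℂ) * sin (t * w)

lemma norm_exp_neg_div_mul_sin_sub_sin_re_le {t : ℝ} (ht : 0 < t) (w : ℂ) :
    ‖((Real.exp (-t) / t : ℝ) : ℂ) * (sin (t * w) - sin (t * w.re))‖ ≤
      |w.im| * Real.exp (-(1 - |w.im|) * t) := by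
  have hsin : ‖sin (t * w) - sin (t * w.re)‖ ≤ Real.exp (t * |w.im|) - 1 := by
    simpa [abs_mul, abs_of_pos ht] using norm_sin_sub_sin_re_le (t * w)
  have hexp : Real.exp (t * |w.im|) - 1 ≤ t * |w.im| * Real.exp (t * |w.im|) := by
    have := mul_le_mul_of_nonneg_right (Real.one_sub_le_exp_neg (t * |w.im|))
      (Real.exp_nonneg (t * |w.im|))
    rw [← Real.exp_add, neg_add_cancel, Real.exp_zero] at this
    linarith
  rw [norm_mul, Complex.norm_real, Real.norm_of_nonneg (by positivity)]
  calc Real.exp (-t) / t * ‖sin (t * w) - sin (t * w.re)‖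
      ≤ Real.exp (-t) / t * (t * |w.im| * Real.exp (t * |w.im|)) := by
        gcongr
        exact hsin.trans hexp
    _ = |w.im| * (Real.exp (-t) * Real.exp (t * |w.im|)) := by field_simp
    _ = |w.im| * Real.exp (-(1 - |w.im|) * t) := by rw [← Real.exp_add]; ring_nf

lemma ofReal_exp_neg_one_mul_mul_sin_div (t l : ℝ) :
    ((Real.exp (-1 * t) * (Real.sin (t * l) / t) : ℝ) : ℂ) =
      ((Real.exp (-t) / t : ℝ) : ℂ) * sin (t * l) := by
  rw [neg_one_mul]
  push_cast
  ring

lemma arctanSymbol_ofReal (l : ℝ) : arctanSymbol l = Real.arctan l := by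
  rw [← div_one l, ← integral_exp_neg_mul_sin_div one_pos, ← integral_complex_ofReal, div_one,
    arctanSymbol]
  simp only [ofReal_exp_neg_one_mul_mul_sin_div]

lemma norm_arctanSymbol_le {w : ℂ} (hw : |w.im| < 1) :
    ‖arctanSymbol w‖ ≤ π / 2 + |w.im| / (1 - |w.im|) := by
  have hbound : ∀ᵐ t ∂volume.restrict (Set.Ioi (0 : ℝ)),
      ‖((Real.exp (-t) / t : ℝ) : ℂ) * (sin (t * w) - sin (t * w.re))‖ ≤
        |w.im| * Real.exp (-(1 - |w.im|) * t) := by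
    filter_upwards [ae_restrict_mem measurableSet_Ioi] with t ht
    exact norm_exp_neg_div_mul_sin_sub_sin_re_le ht w
  have hint := (exp_neg_integrableOn_Ioi 0 (sub_pos.2 hw)).const_mul |w.im|
  have hreal : IntegrableOn (fun t : ℝ => ((Real.exp (-t) / t : ℝ) : ℂ) * sin (t * w.re))
      (Set.Ioi 0) := by
    exact (integrableOn_exp_neg_mul_sin_div one_pos w.re).ofReal.congr
      (.of_forall fun t => ofReal_exp_neg_one_mul_mul_sin_div t w.re)
  have hsplit : arctanSymbol w = Real.arctan w.re + ∫ t in Set.Ioi (0 : ℝ),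
      ((Real.exp (-t) / t : ℝ) : ℂ) * (sin (t * w) - sin (t * w.re)) := by
    have hdiff : IntegrableOn (fun t : ℝ =>
        ((Real.exp (-t) / t : ℝ) : ℂ) * (sin (t * w) - sin (t * w.re))) (Set.Ioi 0) :=
      hint.mono' (Measurable.aestronglyMeasurable (by fun_prop)) hbound
    rw [← arctanSymbol_ofReal, arctanSymbol, arctanSymbol, ← integral_add hreal hdiff]
    simp only [mul_sub, add_sub_cancel]
  rw [hsplit]
  refine (norm_add_le _ _).trans (add_le_add ?_ ?_)
  · rw [Complex.norm_real, Real.norm_eq_abs, abs_le]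
    exact ⟨(Real.neg_pi_div_two_lt_arctan _).le, (Real.arctan_lt_pi_div_two _).le⟩
  · refine (norm_integral_le_of_norm_le hint hbound).trans_eq ?_
    rw [integral_const_mul, integral_exp_mul_Ioi (by linarith), mul_zero, Real.exp_zero,
      neg_div_neg_eq, mul_one_div]

end ArctanSymbol

/-! ### Kernels of functions of the dilation generator -/

/-- The exponentially tilted kernel `e^{cr} k(r)`: conjugating an average over the dilation group by
`|ξ|` replaces its kernel `k` by such a tilt. -/
def tilt (c : ℝ) (k : ℝ → ℂ) (r : ℝ) : ℂ := (Real.exp (c * r) : ℂ) * k r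

/-- The kernel of `sin(tA) φ(A)` when `k` is the kernel of `φ(A)`, where the kernel of an operator
is the `k` for which the operator is `∫ k(r) e^{irA} dr`. -/
def sinKernel (t : ℝ) (k : ℝ → ℂ) (r : ℝ) : ℂ := (k (r - t) - k (r + t)) / (2 * I)

/-- The contribution of time `t` to `arctanKernel k`. -/
def arctanKernelIntegrand (k : ℝ → ℂ) (t r : ℝ) : ℂ :=
  ((Real.exp (-t) / t : ℝ) : ℂ) * sinKernel t k r

/-- The kernel of `arctan(A) φ(A)` when `k` is the kernel of `φ(A)`. -/
def arctanKernel (k : ℝ → ℂ) (r : ℝ) : ℂ := ∫ t in Set.Ioi (0 : ℝ), arctanKernelIntegrand k t r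

/-- The kernel of `(A + i)⁻¹`. -/
def resolventKernel : ℝ → ℂ := (Set.Ici 0).indicator fun s => -I * (Real.exp (-s) : ℂ)

section Tilt

variable {k : ℝ → ℂ} {c : ℝ}

lemma norm_tilt (c : ℝ) (k : ℝ → ℂ) (r : ℝ) : ‖tilt c k r‖ = Real.exp (c * r) * ‖k r‖ := by
  rw [tilt, norm_mul, Complex.norm_real, Real.norm_of_nonneg (Real.exp_nonneg _)]

lemma tilt_zero (k : ℝ → ℂ) : tilt 0 k = k := by
  ext r
  simp [tilt]

lemma tilt_comp_sub (c t : ℝ) (k : ℝ → ℂ) :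
    tilt c (fun r => k (r - t)) = fun r => (Real.exp (c * t) : ℂ) * tilt c k (r - t) := by
  ext r
  simp only [tilt]
  rw [← mul_assoc, ← ofReal_mul, ← Real.exp_add]
  ring_nf

lemma tilt_sinKernel (c t : ℝ) (k : ℝ → ℂ) :
    tilt c (sinKernel t k) = fun r =>
      (tilt c (fun r => k (r - t)) r - tilt c (fun r => k (r - (-t))) r) / (2 * I) := by
  ext r
  simp only [tilt, sinKernel, sub_neg_eq_add]
  ring

lemma tilt_arctanKernelIntegrand (c t : ℝ) (k : ℝ → ℂ) :
    tilt c (arctanKernelIntegrand k t) = fun r =>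
      ((Real.exp (-t) / t : ℝ) : ℂ) * tilt c (sinKernel t k) r := by
  ext r
  simp only [tilt, arctanKernelIntegrand]
  ring

lemma tilt_arctanKernel (c : ℝ) (k : ℝ → ℂ) :
    tilt c (arctanKernel k) = fun r =>
      ∫ t in Set.Ioi (0 : ℝ), tilt c (arctanKernelIntegrand k t) r := by
  ext r
  simp only [tilt, arctanKernel, integral_const_mul]

lemma integrable_tilt_comp_sub (hk : Integrable (tilt c k)) (t : ℝ) :
    Integrable (tilt c fun r => k (r - t)) := by
  rw [tilt_comp_sub]
  exact (hk.comp_sub_right t).const_mul _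

lemma integrable_tilt_sinKernel (hk : Integrable (tilt c k)) (t : ℝ) :
    Integrable (tilt c (sinKernel t k)) := by
  rw [tilt_sinKernel]
  exact ((integrable_tilt_comp_sub hk t).sub (integrable_tilt_comp_sub hk (-t))).div_const _

lemma fourier_tilt_comp_sub (c t : ℝ) (k : ℝ → ℂ) (η : ℝ) :
    𝓕 (tilt c fun r => k (r - t)) η =
      Complex.exp (t * -(2 * π * η + c * I) * I) * 𝓕 (tilt c k) η := by
  simp only [Real.fourier_real_eq_integral_exp_smul, smul_eq_mul, tilt_comp_sub]
  rw [← integral_add_right_eq_self _ t, ← integral_const_mul]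
  refine integral_congr_ae (.of_forall fun r => ?_)
  simp only [add_sub_cancel_right, ← mul_assoc, ofReal_exp, ← Complex.exp_add]
  congr 2
  push_cast
  linear_combination (t * c : ℂ) * I_mul_I

lemma fourier_tilt_sinKernel (hk : Integrable (tilt c k)) (t η : ℝ) :
    𝓕 (tilt c (sinKernel t k)) η = sin (t * -(2 * π * η + c * I)) * 𝓕 (tilt c k) η := by
  have hshift := fourier_sub (integrable_tilt_comp_sub hk t) (integrable_tilt_comp_sub hk (-t)) η
  rw [fourier_tilt_comp_sub, fourier_tilt_comp_sub] at hshift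
  simp only [tilt_sinKernel, div_eq_inv_mul]
  rw [fourier_const_mul, hshift, Complex.sin, mul_inv, inv_I]
  push_cast
  ring_nf

lemma fourier_tilt_arctanKernel (hk : Integrable (tilt c k))
    (hk_int : Integrable (Function.uncurry fun t => tilt c (arctanKernelIntegrand k t))
      ((volume.restrict (Set.Ioi 0)).prod volume)) (η : ℝ) :
    𝓕 (tilt c (arctanKernel k)) η = arctanSymbol (-(2 * π * η + c * I)) * 𝓕 (tilt c k) η := by
  rw [tilt_arctanKernel, fourier_integral_comm hk_int]
  simp only [tilt_arctanKernelIntegrand, fourier_const_mul, fourier_tilt_sinKernel hk,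
    arctanSymbol, ← mul_assoc, integral_mul_const]

lemma integrable_tilt_arctanKernel
    (hk_int : Integrable (Function.uncurry fun t => tilt c (arctanKernelIntegrand k t))
      ((volume.restrict (Set.Ioi 0)).prod volume)) :
    Integrable (tilt c (arctanKernel k)) := by
  rw [tilt_arctanKernel]
  exact hk_int.integral_prod_right

lemma measurable_arctanKernelIntegrand (hk : Measurable k) :
    Measurable (Function.uncurry (arctanKernelIntegrand k)) := by
  unfold arctanKernelIntegrand sinKernel Function.uncurry
  fun_prop

lemma measurable_arctanKernel (hk : Measurable k) : Measurable (arctanKernel k) :=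
  (measurable_arctanKernelIntegrand hk).stronglyMeasurable.integral_prod_left.measurable

end Tilt

section ResolventKernel

lemma measurable_resolventKernel : Measurable resolventKernel :=
  Measurable.indicator (by fun_prop) measurableSet_Ici

lemma norm_resolventKernel_of_nonneg {s : ℝ} (hs : 0 ≤ s) :
    ‖resolventKernel s‖ = Real.exp (-s) := by
  rw [resolventKernel, Set.indicator_of_mem (Set.mem_Ici.2 hs), norm_mul, norm_neg, norm_I, one_mul,
    Complex.norm_real, Real.norm_of_nonneg (Real.exp_nonneg _)]

lemma resolventKernel_of_neg {s : ℝ} (hs : s < 0) : resolventKernel s = 0 :=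
  Set.indicator_of_notMem (Set.notMem_Ici.2 hs) _

lemma integrable_tilt_resolventKernel {c : ℝ} (hc : c < 1) :
    Integrable (tilt c resolventKernel) := by
  have hexp : IntegrableOn (fun r : ℝ => Real.exp (-(1 - c) * r)) (Set.Ici 0) :=
    (integrableOn_Ici_iff_integrableOn_Ioi (by simp)).2
      (exp_neg_integrableOn_Ioi 0 (sub_pos.2 hc))
  have hmeas : AEStronglyMeasurable (tilt c resolventKernel) := by
    have := measurable_resolventKernel
    exact Measurable.aestronglyMeasurable (by unfold tilt; fun_prop)
  refine (hexp.integrable_indicator measurableSet_Ici).mono' hmeas (.of_forall fun r => ?_)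
  rw [norm_tilt]
  rcases le_or_gt 0 r with hr | hr
  · rw [norm_resolventKernel_of_nonneg hr, Set.indicator_of_mem (Set.mem_Ici.2 hr), ← Real.exp_add]
    exact (congrArg Real.exp (by ring)).le
  · rw [resolventKernel_of_neg hr, norm_zero, mul_zero, Set.indicator_of_notMem (by simpa using hr)]

lemma norm_tilt_sinKernel_resolventKernel_le {c t : ℝ} (hc : 0 ≤ c) (hc₁ : c < 1) (ht : 0 < t)
    (r : ℝ) :
    ‖tilt c (sinKernel t resolventKernel) r‖ ≤
      t * ‖tilt c (fun r => resolventKernel (r - t)) r‖ +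
        (Set.Ico (-t) t).indicator (fun _ => (1 : ℝ)) r := by
  rw [norm_tilt, norm_tilt, sinKernel, norm_div, norm_mul, norm_I, mul_one, Complex.norm_ofNat]
  rcases lt_or_ge r (-t) with hr | hr
  · rw [resolventKernel_of_neg (by linarith), resolventKernel_of_neg (by linarith)]
    simp [hr.not_ge]
  rcases lt_or_ge r t with hrt | hrt
  · rw [resolventKernel_of_neg (by linarith), zero_sub, norm_neg, norm_zero, mul_zero, mul_zero,
      zero_add, norm_resolventKernel_of_nonneg (by linarith),
      Set.indicator_of_mem (show r ∈ Set.Ico (-t) t from ⟨hr, hrt⟩),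
      mul_div_assoc', ← Real.exp_add]
    have : Real.exp (c * r + -(r + t)) ≤ 1 := Real.exp_le_one_iff.2 (by nlinarith)
    linarith
  · have hdecay : resolventKernel (r + t) =
        (Real.exp (-(2 * t)) : ℂ) * resolventKernel (r - t) := by
      rw [resolventKernel, Set.indicator_of_mem (Set.mem_Ici.2 (by linarith)),
        Set.indicator_of_mem (Set.mem_Ici.2 (by linarith)), mul_left_comm, ← ofReal_mul,
        ← Real.exp_add]
      ring_nf
    have hexp : ‖(1 : ℂ) - (Real.exp (-(2 * t)) : ℂ)‖ ≤ 2 * t := by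
      rw [← ofReal_one, ← ofReal_sub, Complex.norm_real, Real.norm_of_nonneg]
      · linarith [Real.one_sub_le_exp_neg (2 * t)]
      · exact sub_nonneg.2 (Real.exp_le_one_iff.2 (by linarith))
    rw [hdecay, ← one_sub_mul, norm_mul,
      Set.indicator_of_notMem fun h : r ∈ Set.Ico (-t) t => hrt.not_gt h.2, add_zero]
    calc _ ≤ Real.exp (c * r) * (2 * t * ‖resolventKernel (r - t)‖ / 2) := by gcongr
      _ = _ := by ring

lemma integral_norm_tilt_comp_sub (c t : ℝ) (k : ℝ → ℂ) :
    ∫ r, ‖tilt c (fun r => k (r - t)) r‖ = Real.exp (c * t) * ∫ r, ‖tilt c k r‖ := by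
  simp only [tilt_comp_sub, norm_mul, Complex.norm_real, Real.norm_of_nonneg (Real.exp_nonneg _)]
  rw [integral_const_mul, integral_sub_right_eq_self fun r => ‖tilt c k r‖]

lemma integral_norm_tilt_sinKernel_resolventKernel_le {c t : ℝ} (hc : 0 ≤ c) (hc₁ : c < 1)
    (ht : 0 < t) :
    ∫ r, ‖tilt c (sinKernel t resolventKernel) r‖ ≤
      t * (Real.exp (c * t) * (∫ r, ‖tilt c resolventKernel r‖) + 2) := by
  have hk := integrable_tilt_resolventKernel hc₁
  have hshift := (integrable_tilt_comp_sub hk t).norm.const_mul t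
  have hind : Integrable ((Set.Ico (-t) t).indicator (fun _ => (1 : ℝ))) :=
    (integrableOn_const (by simp)).integrable_indicator measurableSet_Ico
  calc ∫ r, ‖tilt c (sinKernel t resolventKernel) r‖
      ≤ ∫ r, (t * ‖tilt c (fun r => resolventKernel (r - t)) r‖ +
          (Set.Ico (-t) t).indicator (fun _ => (1 : ℝ)) r) :=
        integral_mono (integrable_tilt_sinKernel hk t).norm (hshift.add hind)
          (norm_tilt_sinKernel_resolventKernel_le hc hc₁ ht)
    _ = t * (Real.exp (c * t) * ∫ r, ‖tilt c resolventKernel r‖) + 2 * t := by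
        rw [integral_add hshift hind, integral_const_mul, integral_norm_tilt_comp_sub,
          integral_indicator measurableSet_Ico]
        simp [Measure.real, ht.le]
        ring
    _ = _ := by ring

lemma integrable_tilt_arctanKernelIntegrand_resolventKernel {c : ℝ} (hc : 0 ≤ c) (hc₁ : c < 1) :
    Integrable (Function.uncurry fun t => tilt c (arctanKernelIntegrand resolventKernel t))
      ((volume.restrict (Set.Ioi 0)).prod volume) := by
  have hk := integrable_tilt_resolventKernel hc₁
  have hmeas : AEStronglyMeasurable
      (Function.uncurry fun t => tilt c (arctanKernelIntegrand resolventKernel t))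
      ((volume.restrict (Set.Ioi 0)).prod volume) := by
    have := measurable_arctanKernelIntegrand measurable_resolventKernel
    exact Measurable.aestronglyMeasurable (by unfold tilt; fun_prop)
  refine (integrable_prod_iff hmeas).2 ⟨.of_forall fun t => ?_, ?_⟩
  · simp only [Function.uncurry, tilt_arctanKernelIntegrand]
    exact (integrable_tilt_sinKernel hk t).const_mul _
  · set J := ∫ r, ‖tilt c resolventKernel r‖
    refine (((exp_neg_integrableOn_Ioi 0 (sub_pos.2 hc₁)).mul_const J).add
      ((exp_neg_integrableOn_Ioi 0 one_pos).mul_const 2)).mono' hmeas.norm.integral_prod_right' ?_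
    filter_upwards [ae_restrict_mem measurableSet_Ioi] with t ht
    have ht : 0 < t := ht
    simp only [Function.uncurry, tilt_arctanKernelIntegrand, norm_mul, Complex.norm_real,
      Pi.add_apply]
    rw [integral_const_mul, Real.norm_of_nonneg (by positivity),
      Real.norm_of_nonneg (by positivity)]
    calc _ ≤ Real.exp (-t) / t * (t * (Real.exp (c * t) * J + 2)) := by
          gcongr
          exact integral_norm_tilt_sinKernel_resolventKernel_le hc hc₁ ht
      _ = Real.exp (-t) * Real.exp (c * t) * J + Real.exp (-t) * 2 := by field_simp
      _ = Real.exp (-(1 - c) * t) * J + Real.exp (-1 * t) * 2 := by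
          rw [← Real.exp_add]
          ring_nf

end ResolventKernel

/-! ### Averages over the dilation group -/

/-- The average `∫ k(r) e^{irhA} u dr` of `u` over the dilation group, i.e. `φ(hA) u` when `k` is
the kernel of `φ`. -/
def dilAverage (d : ℕ) (h : ℝ) (k : ℝ → ℂ) (u : Ed d → ℂ) : Ed d → ℂ :=
  fun x => ∫ r, k r * dil d (r * h) u x

section Dilation

variable {d : ℕ}

lemma continuous_dil {u : Ed d → ℂ} (hu : Continuous u) (s : ℝ) : Continuous (dil d s u) := by
  unfold dil
  fun_prop

lemma dil_dil (s t : ℝ) (u : Ed d → ℂ) : dil d s (dil d t u) = dil d (t + s) u := by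
  ext x
  simp only [dil, smul_smul, ← Real.exp_add, ← mul_assoc, ← ofReal_mul]
  ring_nf

lemma norm_dil (s : ℝ) (u : Ed d → ℂ) (x : Ed d) :
    ‖dil d s u x‖ = Real.exp (s * d / 2) * ‖u (Real.exp s • x)‖ := by
  rw [dil, norm_mul, Complex.norm_real, Real.norm_of_nonneg (Real.exp_nonneg _)]

lemma exists_norm_dil_schwartzMap_le (u : SchwartzMap (Ed d) ℂ) {x : Ed d} (hx : x ≠ 0) :
    ∃ B, ∀ s, ‖dil d s u x‖ ≤ B := by
  obtain ⟨B, hB⟩ := exists_exp_mul_norm_schwartzMap_exp_smul_le u hx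
    (show (0 : ℝ) ≤ d / 2 by positivity)
  refine ⟨B, fun s => ?_⟩
  simpa [norm_dil, mul_comm, mul_div_assoc] using hB s

lemma integral_comp_exp_smul {F : Type*} [NormedAddCommGroup F] [NormedSpace ℝ F] (f : Ed d → F)
    (s : ℝ) : ∫ x, f (Real.exp s • x) = Real.exp (-(s * d)) • ∫ x, f x := by
  rw [Measure.integral_comp_smul, finrank_euclideanSpace_fin, abs_of_pos (by positivity),
    Real.exp_neg, mul_comm s, Real.exp_nat_mul]

lemma integrable_dil {u : Ed d → ℂ} (hu : Integrable u) (s : ℝ) : Integrable (dil d s u) :=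
  (hu.comp_smul (Real.exp_ne_zero s)).const_mul _

lemma memLp_two_dil {u : Ed d → ℂ} (hu : Continuous u) (hu₂ : MemLp u 2 volume) (s : ℝ) :
    MemLp (dil d s u) 2 volume := by
  rw [memLp_two_iff_integrable_sq_norm (continuous_dil hu s).aestronglyMeasurable]
  simp only [norm_dil, mul_pow]
  exact (((memLp_two_iff_integrable_sq_norm hu₂.1).1 hu₂).comp_smul
    (Real.exp_ne_zero s)).const_mul _

lemma integral_norm_sq_dil (s : ℝ) (u : Ed d → ℂ) :
    ∫ x, ‖dil d s u x‖ ^ 2 = ∫ x, ‖u x‖ ^ 2 := by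
  simp only [norm_dil, mul_pow]
  rw [integral_const_mul, integral_comp_exp_smul fun x => ‖u x‖ ^ 2, smul_eq_mul, ← mul_assoc,
    ← Real.exp_nat_mul, ← Real.exp_add, Nat.cast_ofNat, mul_div_cancel₀ _ two_ne_zero,
    add_neg_cancel, Real.exp_zero, one_mul]

lemma fourier_dil (s : ℝ) (u : Ed d → ℂ) : 𝓕 (dil d s u) = dil d (-s) (𝓕 u) := by
  ext ξ
  have hinner (x : Ed d) : inner ℝ x ξ = inner ℝ (Real.exp s • x) (Real.exp (-s) • ξ) := by
    rw [inner_smul_left, inner_smul_right, ← mul_assoc]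
    simp [← Real.exp_add]
  have hscale := integral_comp_exp_smul
    (fun x => Real.fourierChar (-inner ℝ x (Real.exp (-s) • ξ)) • u x) s
  simp only [Real.fourier_eq, dil, ← mul_smul_comm, hinner]
  rw [integral_const_mul, hscale, Complex.real_smul, ← mul_assoc, ← ofReal_mul, ← Real.exp_add]
  ring_nf

lemma integrable_mul_dil {k : ℝ → ℂ} (hk : Integrable k) (h : ℝ) (u : SchwartzMap (Ed d) ℂ)
    {x : Ed d} (hx : x ≠ 0) : Integrable fun r => k r * dil d (r * h) u x := by
  obtain ⟨B, hB⟩ := exists_norm_dil_schwartzMap_le u hx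
  have hu := u.continuous
  have hcont : Continuous fun r => dil d (r * h) u x := by
    unfold dil
    fun_prop
  exact hk.mul_bdd hcont.aestronglyMeasurable (.of_forall fun r => hB (r * h))

end Dilation

section FunctionalCalculus

variable {d : ℕ} {k : ℝ → ℂ}

lemma dil_dilAverage (h t : ℝ) (k : ℝ → ℂ) (u : Ed d → ℂ) :
    dil d (t * h) (dilAverage d h k u) = dilAverage d h (fun r => k (r - t)) u := by
  ext x
  rw [dil, dilAverage, dilAverage, ← integral_const_mul,
    ← integral_sub_right_eq_self (fun r => (Real.exp (t * h * d / 2) : ℂ) *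
      (k r * dil d (r * h) u (Real.exp (t * h) • x))) t]
  refine integral_congr_ae (.of_forall fun r => ?_)
  have hgroup := congrFun (dil_dil (t * h) ((r - t) * h) u) x
  rw [← add_mul, sub_add_cancel] at hgroup
  simp only [← hgroup]
  exact mul_left_comm _ _ _

lemma sinA_dilAverage (hk : Integrable k) (h t : ℝ) (u : SchwartzMap (Ed d) ℂ) {x : Ed d}
    (hx : x ≠ 0) :
    sinA d (t * h) (dilAverage d h k u) x = dilAverage d h (sinKernel t k) u x := by
  rw [sinA, ← neg_mul, dil_dilAverage, dil_dilAverage, dilAverage, dilAverage, dilAverage,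
    ← integral_sub (integrable_mul_dil (hk.comp_sub_right t) h u hx)
      (integrable_mul_dil (hk.comp_sub_right (-t)) h u hx), ← integral_div]
  refine integral_congr_ae (.of_forall fun r => ?_)
  simp only [sinKernel, sub_neg_eq_add]
  ring

lemma arctanA_dilAverage (hk : Integrable k)
    (hk_int : Integrable (Function.uncurry (arctanKernelIntegrand k))
      ((volume.restrict (Set.Ioi 0)).prod volume))
    (h : ℝ) (u : SchwartzMap (Ed d) ℂ) {x : Ed d} (hx : x ≠ 0) :
    arctanA d h (dilAverage d h k u) x = dilAverage d h (arctanKernel k) u x := by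
  obtain ⟨B, hB⟩ := exists_norm_dil_schwartzMap_le u hx
  have hu := u.continuous
  have hcont : Continuous fun p : ℝ × ℝ => dil d (p.2 * h) u x := by
    unfold dil
    fun_prop
  have hint : Integrable (Function.uncurry fun t r =>
      arctanKernelIntegrand k t r * dil d (r * h) u x)
      ((volume.restrict (Set.Ioi 0)).prod volume) :=
    hk_int.mul_bdd hcont.aestronglyMeasurable (.of_forall fun p => hB (p.2 * h))
  calc arctanA d h (dilAverage d h k u) x
      = ∫ t in Set.Ioi (0 : ℝ), ∫ r, arctanKernelIntegrand k t r * dil d (r * h) u x := by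
        simp only [arctanA, sinA_dilAverage hk h _ u hx, dilAverage, ← integral_const_mul,
          arctanKernelIntegrand, mul_assoc]
    _ = ∫ r, ∫ t in Set.Ioi (0 : ℝ), arctanKernelIntegrand k t r * dil d (r * h) u x :=
        integral_integral_swap hint
    _ = dilAverage d h (arctanKernel k) u x := by
        simp only [integral_mul_const, dilAverage, arctanKernel]

lemma measurable_dilAverage (hk : Measurable k) (h : ℝ) {u : Ed d → ℂ}
    (hu : Continuous u) : Measurable (dilAverage d h k u) := by
  have hcont : Continuous fun p : Ed d × ℝ => dil d (p.2 * h) u p.1 := by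
    unfold dil
    fun_prop
  have hmeas : Measurable (Function.uncurry fun (x : Ed d) r => k r * dil d (r * h) u x) :=
    (hk.comp measurable_snd).mul hcont.measurable
  exact hmeas.stronglyMeasurable.integral_prod_right.measurable

lemma resDil_neg_I (h : ℝ) (u : Ed d → ℂ) :
    resDil d h (-I) u = dilAverage d h resolventKernel u := by
  ext x
  have him : (-I).im < 0 := by simp
  have hexponent (r : ℝ) : -(I * r * -I) = ((-r : ℝ) : ℂ) := by
    push_cast
    linear_combination (r : ℂ) * I_mul_I
  simp only [resDil, if_pos him, hexponent, ← ofReal_exp]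
  rw [← integral_const_mul, ← integral_indicator measurableSet_Ici, dilAverage]
  refine integral_congr_ae (.of_forall fun r => ?_)
  by_cases hr : r ∈ Set.Ici (0 : ℝ) <;> simp [resolventKernel, hr, mul_assoc]

end FunctionalCalculus

section FourierAverage

variable {d : ℕ} {k : ℝ → ℂ}

lemma integrable_mul_dil_mul (hk : Integrable k) (h : ℝ) {u φ : Ed d → ℂ} (hu : Continuous u)
    (hu₂ : MemLp u 2 volume) (hφ : MemLp φ 2 volume) :
    Integrable (Function.uncurry fun x r => k r * dil d (r * h) u x * φ x)
      (volume.prod volume) := by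
  have hcont : Continuous fun p : Ed d × ℝ => dil d (p.2 * h) u p.1 := by
    unfold dil
    fun_prop
  have hmeas : AEStronglyMeasurable
      (Function.uncurry fun (x : Ed d) (r : ℝ) => k r * dil d (r * h) u x * φ x)
      (volume.prod volume) :=
    (hk.1.comp_snd.mul hcont.aestronglyMeasurable).mul hφ.1.comp_fst
  have hφ_sq := (memLp_two_iff_integrable_sq_norm hφ.1).1 hφ
  refine (integrable_prod_iff' hmeas).2 ⟨.of_forall fun r => ?_, ?_⟩
  · simp only [Function.uncurry, mul_assoc]
    exact ((memLp_two_dil hu hu₂ (r * h)).integrable_mul hφ).const_mul (k r)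
  refine (hk.norm.mul_const ((∫ x, ‖u x‖ ^ 2) + ∫ x, ‖φ x‖ ^ 2)).mono'
    hmeas.norm.prod_swap.integral_prod_right' (.of_forall fun r => ?_)
  have hdil := memLp_two_dil hu hu₂ (r * h)
  have hdil_sq := (memLp_two_iff_integrable_sq_norm hdil.1).1 hdil
  rw [Real.norm_of_nonneg (by positivity), ← integral_norm_sq_dil (r * h) u,
    ← integral_add hdil_sq hφ_sq, ← integral_const_mul]
  refine integral_mono_of_nonneg (.of_forall fun x => norm_nonneg _)
    ((hdil_sq.add hφ_sq).const_mul _) (.of_forall fun x => ?_)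
  simp only [Function.uncurry, norm_mul, mul_assoc]
  gcongr
  nlinarith [two_mul_le_add_sq ‖dil d (r * h) u x‖ ‖φ x‖, sq_nonneg ‖dil d (r * h) u x‖,
    sq_nonneg ‖φ x‖]

lemma integral_dilAverage_mul (hk : Integrable k) (h : ℝ) {u φ : Ed d → ℂ} (hu : Continuous u)
    (hu₂ : MemLp u 2 volume) (hφ : MemLp φ 2 volume) :
    ∫ x, dilAverage d h k u x * φ x = ∫ r, k r * ∫ x, dil d (r * h) u x * φ x := by
  simp only [dilAverage, ← integral_mul_const]
  rw [integral_integral_swap (integrable_mul_dil_mul hk h hu hu₂ hφ)]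
  simp only [mul_assoc, integral_const_mul]

lemma locallyIntegrable_dilAverage (hk : Integrable k) (h : ℝ) {u : Ed d → ℂ}
    (hu : Continuous u) (hu₂ : MemLp u 2 volume) : LocallyIntegrable (dilAverage d h k u) := by
  refine locallyIntegrable_iff.2 fun K hK => ?_
  have hind : MemLp (K.indicator fun _ => (1 : ℂ)) 2 (volume : Measure (Ed d)) :=
    memLp_indicator_const 2 hK.measurableSet 1 (.inr hK.measure_lt_top.ne)
  rw [← integrable_indicator_iff hK.measurableSet]
  refine (integrable_mul_dil_mul hk h hu hu₂ hind).integral_prod_left.congr (.of_forall fun x => ?_)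
  by_cases hx : x ∈ K <;> simp [dilAverage, hx]

lemma fourier_dilAverage (hk : Integrable k) (h : ℝ) (u : SchwartzMap (Ed d) ℂ)
    (hint : Integrable (dilAverage d h k u)) :
    𝓕 (dilAverage d h k u) =ᵐ[volume] dilAverage d (-h) k (𝓕 u : SchwartzMap (Ed d) ℂ) := by
  set U : SchwartzMap (Ed d) ℂ := 𝓕 u with hU
  refine ae_eq_of_integral_mul_schwartzMap_eq
    (continuous_fourier_of_integrable hint).locallyIntegrable
    (locallyIntegrable_dilAverage hk (-h) U.continuous (U.memLp 2 volume)) fun φ => ?_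
  have hφ : Integrable φ := φ.integrable
  calc ∫ ξ, 𝓕 (dilAverage d h k u) ξ * φ ξ
      = ∫ x, dilAverage d h k u x * (𝓕 φ : SchwartzMap (Ed d) ℂ) x := by
        rw [integral_fourier_mul_eq_integral_mul_fourier hint hφ, SchwartzMap.fourier_coe]
    _ = ∫ r, k r * ∫ x, dil d (r * h) u x * (𝓕 φ : SchwartzMap (Ed d) ℂ) x :=
        integral_dilAverage_mul hk h u.continuous (u.memLp 2 volume)
          ((𝓕 φ : SchwartzMap (Ed d) ℂ).memLp 2 volume)
    _ = ∫ r, k r * ∫ ξ, dil d (r * -h) U ξ * φ ξ := by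
        simp only [SchwartzMap.fourier_coe, hU, mul_neg, ← fourier_dil,
          integral_fourier_mul_eq_integral_mul_fourier (integrable_dil u.integrable _) hφ]
    _ = ∫ ξ, dilAverage d (-h) k U ξ * φ ξ :=
        (integral_dilAverage_mul hk (-h) U.continuous (U.memLp 2 volume) (φ.memLp 2 volume)).symm

lemma integrable_dilAverage {h : ℝ} (hk : Integrable (tilt (-(h * d / 2)) k)) {u : Ed d → ℂ}
    (hu : Continuous u) (hu_int : Integrable u) : Integrable (dilAverage d h k u) := by
  have hcancel (x : Ed d) (r : ℝ) : k r * dil d (r * h) u x =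
      tilt (-(h * d / 2)) k r * ((Real.exp (r * h * d) : ℂ) * u (Real.exp (r * h) • x)) := by
    have hexp : Real.exp (r * h * d / 2) = Real.exp (-(h * d / 2) * r) * Real.exp (r * h * d) := by
      rw [← Real.exp_add]
      ring_nf
    rw [dil, tilt, hexp, ofReal_mul]
    ring
  have hcont : Continuous fun p : Ed d × ℝ =>
      (Real.exp (p.2 * h * d) : ℂ) * u (Real.exp (p.2 * h) • p.1) := by fun_prop
  have hmeas : AEStronglyMeasurable (Function.uncurry fun x r => k r * dil d (r * h) u x)
      ((volume : Measure (Ed d)).prod volume) := by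
    simp only [hcancel]
    exact hk.1.comp_snd.mul hcont.aestronglyMeasurable
  suffices Integrable (Function.uncurry fun x r => k r * dil d (r * h) u x)
      ((volume : Measure (Ed d)).prod volume) from this.integral_prod_left
  refine (integrable_prod_iff' hmeas).2
    ⟨.of_forall fun r => (integrable_dil hu_int (r * h)).const_mul (k r),
    (hk.norm.mul_const (∫ x, ‖u x‖)).congr (.of_forall fun r => ?_)⟩
  simp only [Function.uncurry, hcancel, norm_mul, Complex.norm_real,
    Real.norm_of_nonneg (Real.exp_nonneg _)]
  rw [integral_const_mul, integral_const_mul, integral_comp_exp_smul fun x => ‖u x‖, smul_eq_mul,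
    ← mul_assoc (Real.exp _), ← Real.exp_add, add_neg_cancel, Real.exp_zero, one_mul]

end FourierAverage

/-! ### Dilation averages along rays -/

/-- The function `|ξ| U(ξ)` on the ray through `ω`, in the logarithmic coordinate `ξ = e^{hy} ω` and
weighted by the square root `e^{hyd/2}` of the polar density, so that its `L²` norm on `ℝ` is the
radial part of the one on `ℝ^d`. -/
def rayProfile {d : ℕ} (h : ℝ) (U : Ed d → ℂ) (ω : Ed d) (y : ℝ) : ℂ :=
  (Real.exp ((1 + d / 2) * (h * y)) : ℂ) * U (Real.exp (h * y) • ω)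

section Rays

variable {d : ℕ} {h : ℝ}

lemma exists_norm_rayProfile_le (hh : 0 < h) (U : SchwartzMap (Ed d) ℂ) {ω : Ed d} (hω : ω ≠ 0) :
    ∃ B, ∀ y, ‖rayProfile h U ω y‖ ≤ B * Real.exp (-(h * |y|)) := by
  obtain ⟨B, hB⟩ := exists_exp_mul_norm_schwartzMap_exp_smul_le U hω
    (le_add_of_nonneg_right (by positivity) : (1 : ℝ) ≤ 1 + d / 2)
  refine ⟨B, fun y => ?_⟩
  rw [rayProfile, norm_mul, Complex.norm_real, Real.norm_of_nonneg (Real.exp_nonneg _)]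
  simpa only [abs_mul, abs_of_pos hh, one_mul] using hB (h * y)

lemma integrable_rayProfile (hh : 0 < h) (U : SchwartzMap (Ed d) ℂ) {ω : Ed d} (hω : ω ≠ 0) :
    Integrable (rayProfile h U ω) := by
  obtain ⟨B, hB⟩ := exists_norm_rayProfile_le hh U hω
  have hU := U.continuous
  have hcont : Continuous (rayProfile h U ω) := by
    unfold rayProfile
    fun_prop
  exact ((integrable_exp_neg_mul_abs hh).const_mul B).mono' hcont.aestronglyMeasurable
    (.of_forall hB)

lemma convolution_tilt_rayProfile (h : ℝ) (k : ℝ → ℂ) (U : Ed d → ℂ) (ω : Ed d) (y : ℝ) :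
    (tilt h k ⋆[mul ℂ ℂ] rayProfile h U ω) y =
      (Real.exp ((1 + d / 2) * (h * y)) : ℂ) * dilAverage d (-h) k U (Real.exp (h * y) • ω) := by
  rw [convolution_def, dilAverage, ← integral_const_mul]
  refine integral_congr_ae (.of_forall fun r => ?_)
  have hexp : Real.exp (h * r) * Real.exp ((1 + d / 2) * (h * (y - r))) =
      Real.exp ((1 + d / 2) * (h * y)) * Real.exp (r * -h * d / 2) := by
    rw [← Real.exp_add, ← Real.exp_add]
    ring_nf
  have hpoint : h * (y - r) = r * -h + h * y := by ring
  have hexp' := congrArg ((↑) : ℝ → ℂ) hexp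
  simp only [ofReal_mul] at hexp'
  simp only [ContinuousLinearMap.mul_apply', tilt, rayProfile, dil, smul_smul, ← Real.exp_add]
  rw [← hpoint]
  linear_combination k r * U (Real.exp (h * (y - r)) • ω) * hexp'

lemma ofReal_mul_enorm_norm_mul_dilAverage_sq (hh : 0 < h) (k : ℝ → ℂ) (U : Ed d → ℂ) {ω : Ed d}
    (hω : ‖ω‖ = 1) (y : ℝ) :
    ENNReal.ofReal (h * Real.exp (h * y) ^ d) * ‖((‖Real.exp (h * y) • ω‖ : ℝ) : ℂ) *
        dilAverage d (-h) k U (Real.exp (h * y) • ω)‖ₑ ^ 2 =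
      ENNReal.ofReal h * ‖(tilt h k ⋆[mul ℂ ℂ] rayProfile h U ω) y‖ₑ ^ 2 := by
  have hexp : Real.exp (h * y) ^ d * Real.exp (h * y) ^ 2 =
      Real.exp ((1 + d / 2) * (h * y)) ^ 2 := by
    simp only [← Real.exp_nat_mul, ← Real.exp_add]
    push_cast
    ring_nf
  simp only [convolution_tilt_rayProfile, norm_smul, hω, mul_one, Real.norm_of_nonneg,
    Real.exp_nonneg, ← ofReal_norm, norm_mul, Complex.norm_real,
    ← ENNReal.ofReal_pow, norm_nonneg, mul_nonneg]
  rw [← ENNReal.ofReal_mul (by positivity), ← ENNReal.ofReal_mul hh.le, mul_pow, mul_pow, ← hexp]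
  ring_nf

lemma eLpNorm_norm_mul_dilAverage_sq [NeZero d] (hh : 0 < h) {k : ℝ → ℂ} (hk : Measurable k)
    {U : Ed d → ℂ} (hU : Continuous U) :
    eLpNorm (fun ξ : Ed d => (‖ξ‖ : ℂ) * dilAverage d (-h) k U ξ) 2 volume ^ 2 =
      ∫⁻ ω : Metric.sphere (0 : Ed d) 1, ENNReal.ofReal h *
        eLpNorm (tilt h k ⋆[mul ℂ ℂ] rayProfile h U ω) 2 volume ^ 2
          ∂(volume : Measure (Ed d)).toSphere := by
  have hmeas := measurable_dilAverage hk (-h) hU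
  rw [eLpNorm_two_sq_eq_lintegral, lintegral_eq_lintegral_toSphere_exp volume hh (by fun_prop)]
  refine lintegral_congr fun ω => ?_
  have hω : ‖(ω : Ed d)‖ = 1 := norm_eq_of_mem_sphere ω
  rw [eLpNorm_two_sq_eq_lintegral, ← lintegral_const_mul' _ _ ENNReal.ofReal_ne_top]
  simp only [finrank_euclideanSpace_fin, ofReal_mul_enorm_norm_mul_dilAverage_sq hh k U hω]

lemma eLpNorm_norm_mul_dilAverage_le_of_norm_fourier_le [NeZero d] (hh : 0 < h) {k₁ k₂ : ℝ → ℂ}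
    (hk₁ : Measurable k₁) (hk₂ : Measurable k₂) (hk₁_int : Integrable (tilt h k₁))
    (hk₂_int : Integrable (tilt h k₂)) {C : ℝ}
    (hC : ∀ η, ‖𝓕 (tilt h k₁) η‖ ≤ C * ‖𝓕 (tilt h k₂) η‖) (U : SchwartzMap (Ed d) ℂ) :
    eLpNorm (fun ξ : Ed d => (‖ξ‖ : ℂ) * dilAverage d (-h) k₁ U ξ) 2 volume ≤
      ENNReal.ofReal C *
        eLpNorm (fun ξ : Ed d => (‖ξ‖ : ℂ) * dilAverage d (-h) k₂ U ξ) 2 volume := by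
  rw [← ENNReal.pow_le_pow_left_iff two_ne_zero, mul_pow,
    eLpNorm_norm_mul_dilAverage_sq hh hk₁ U.continuous,
    eLpNorm_norm_mul_dilAverage_sq hh hk₂ U.continuous, ← lintegral_const_mul' _ _ (by finiteness)]
  refine lintegral_mono fun ω => ?_
  have hω : (ω : Ed d) ≠ 0 := ne_zero_of_mem_unit_sphere ω
  obtain ⟨B, hB⟩ := exists_norm_rayProfile_le hh U hω
  have hB₀ : 0 ≤ B := by simpa using (norm_nonneg _).trans (hB 0)
  have hbound (y : ℝ) : ‖rayProfile h U ω y‖ ≤ B :=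
    (hB y).trans (mul_le_of_le_one_right hB₀ (Real.exp_le_one_iff.2 (by
      have := hh.le
      simp only [Left.neg_nonpos_iff]
      positivity)))
  rw [mul_left_comm, ← mul_pow]
  gcongr
  exact eLpNorm_convolution_le_of_norm_fourier_le hk₁_int hk₂_int (integrable_rayProfile hh U hω)
    hbound hC

lemma eLpNorm_norm_mul_dilAverage_arctanKernel_le [NeZero d] (hh : 0 < h) (hh₁ : h < 1) {k : ℝ → ℂ}
    (hk : Measurable k) (hk_int : Integrable (tilt h k))
    (hk_int' : Integrable (Function.uncurry fun t => tilt h (arctanKernelIntegrand k t))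
      ((volume.restrict (Set.Ioi 0)).prod volume)) (U : SchwartzMap (Ed d) ℂ) :
    eLpNorm (fun ξ : Ed d => (‖ξ‖ : ℂ) * dilAverage d (-h) (arctanKernel k) U ξ) 2 volume ≤
      ENNReal.ofReal (π / 2 + h / (1 - h)) *
        eLpNorm (fun ξ : Ed d => (‖ξ‖ : ℂ) * dilAverage d (-h) k U ξ) 2 volume := by
  refine eLpNorm_norm_mul_dilAverage_le_of_norm_fourier_le hh (measurable_arctanKernel hk) hk
    (integrable_tilt_arctanKernel hk_int') hk_int (fun η => ?_) U
  have him : |(-(2 * π * η + h * I) : ℂ).im| = h := by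
    simp [abs_of_pos hh]
  rw [fourier_tilt_arctanKernel hk_int hk_int', norm_mul]
  gcongr
  simpa only [him] using norm_arctanSymbol_le (him.trans_lt hh₁)

lemma eLpNorm_norm_mul_fourier_dilAverage {k : ℝ → ℂ} (hk : Integrable k) (h : ℝ)
    (u : SchwartzMap (Ed d) ℂ) (hint : Integrable (dilAverage d h k u)) :
    eLpNorm (fun ξ : Ed d => (‖ξ‖ : ℂ) * 𝓕 (dilAverage d h k u) ξ) 2 volume =
      eLpNorm (fun ξ : Ed d =>
        (‖ξ‖ : ℂ) * dilAverage d (-h) k (𝓕 u : SchwartzMap (Ed d) ℂ) ξ) 2 volume := by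
  refine eLpNorm_congr_ae ?_
  filter_upwards [fourier_dilAverage hk h u hint] with ξ hξ
  rw [hξ]

/- For `hd ≥ 2` the left-hand average need not be in `L¹`; the integral defining `𝓕` is then `0`,
which is why this is only an inequality. -/
lemma eLpNorm_norm_mul_fourier_arctanA_dilAverage_le [NeZero d] {k : ℝ → ℂ} (hk : Integrable k)
    (hk_int : Integrable (Function.uncurry (arctanKernelIntegrand k))
      ((volume.restrict (Set.Ioi 0)).prod volume)) (h : ℝ) (u : SchwartzMap (Ed d) ℂ) :
    eLpNorm (fun ξ : Ed d => (‖ξ‖ : ℂ) * 𝓕 (arctanA d h (dilAverage d h k u)) ξ) 2 volume ≤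
      eLpNorm (fun ξ : Ed d => (‖ξ‖ : ℂ) *
        dilAverage d (-h) (arctanKernel k) (𝓕 u : SchwartzMap (Ed d) ℂ) ξ) 2 volume := by
  by_cases hint : Integrable (arctanA d h (dilAverage d h k u))
  · have hae : arctanA d h (dilAverage d h k u) =ᵐ[volume] dilAverage d h (arctanKernel k) u := by
      filter_upwards [Measure.ae_ne volume (0 : Ed d)] with x hx
      exact arctanA_dilAverage hk hk_int h u hx
    simp only [Real.fourier_congr_ae hae]
    exact (eLpNorm_norm_mul_fourier_dilAverage hk_int.integral_prod_right h u
      (hint.congr hae)).le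
  · simp [fourier_eq_zero_of_not_integrable hint]

lemma integrable_dilAverage_resolventKernel (hh : 0 ≤ h) (u : SchwartzMap (Ed d) ℂ) :
    Integrable (dilAverage d h resolventKernel u) := by
  have hdecay : -(h * d / 2) < 1 := by
    have : 0 ≤ h * d / 2 := by positivity
    linarith
  exact integrable_dilAverage (integrable_tilt_resolventKernel hdecay) u.continuous u.integrable

lemma eLpNorm_norm_mul_fourier_arctanA_resDil_le [NeZero d] (hh : 0 < h) (hh₁ : h < 1)
    (u : SchwartzMap (Ed d) ℂ) :
    eLpNorm (fun ξ : Ed d => (‖ξ‖ : ℂ) * 𝓕 (arctanA d h (resDil d h (-I) u)) ξ) 2 volume ≤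
      ENNReal.ofReal (π / 2 + h / (1 - h)) *
        eLpNorm (fun ξ : Ed d => (‖ξ‖ : ℂ) * 𝓕 (resDil d h (-I) u) ξ) 2 volume := by
  have hk : Integrable resolventKernel := by
    simpa only [tilt_zero] using integrable_tilt_resolventKernel one_pos
  have hk_int : Integrable (Function.uncurry (arctanKernelIntegrand resolventKernel))
      ((volume.restrict (Set.Ioi 0)).prod volume) := by
    simpa only [tilt_zero] using
      integrable_tilt_arctanKernelIntegrand_resolventKernel le_rfl one_pos
  rw [resDil_neg_I, eLpNorm_norm_mul_fourier_dilAverage hk h u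
    (integrable_dilAverage_resolventKernel hh.le u)]
  exact (eLpNorm_norm_mul_fourier_arctanA_dilAverage_le hk hk_int h u).trans
    (eLpNorm_norm_mul_dilAverage_arctanKernel_le hh hh₁ measurable_resolventKernel
      (integrable_tilt_resolventKernel hh₁)
      (integrable_tilt_arctanKernelIntegrand_resolventKernel hh.le hh₁) (𝓕 u))

end Rays

/-- **Proposition (boundedness of `|D| F(hA) (hA+i)⁻¹` against `|D| (hA+i)⁻¹`).**
For every `0 < h₀ < 1` there is `C > 0` with
`‖ |D| F(hA) (hA+i)⁻¹ u ‖_{L²} ≤ C ‖ |D| (hA+i)⁻¹ u ‖_{L²}` for all Schwartz `u` and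
all `0 < h ≤ h₀`, where `F = arctan`.  The `L²` norms of the `|D|`-images are
computed on the Fourier side (Plancherel). -/
theorem statement13 (d : ℕ) (h₀ : ℝ) (hh₀ : 0 < h₀) (hh₀' : h₀ < 1) :
    ∃ C : ℝ, 0 < C ∧
      ∀ (u : SchwartzMap (Ed d) ℂ) (h : ℝ), 0 < h → h ≤ h₀ →
        eLpNorm (fun ξ : Ed d =>
            (‖ξ‖ : ℂ) * 𝓕 (arctanA d h (resDil d h (-Complex.I) ⇑u)) ξ) 2 volume
          ≤ ENNReal.ofReal C *
            eLpNorm (fun ξ : Ed d =>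
              (‖ξ‖ : ℂ) * 𝓕 (resDil d h (-Complex.I) ⇑u) ξ) 2 volume := by
  have h₀_gap : 0 < 1 - h₀ := sub_pos.2 hh₀'
  refine ⟨π / 2 + h₀ / (1 - h₀), add_pos (by positivity) (div_pos hh₀ h₀_gap), fun u h hh hle => ?_⟩
  rcases eq_or_ne d 0 with rfl | hd
  · have hnorm (ξ : Ed 0) : ‖ξ‖ = 0 := by rw [Subsingleton.elim ξ 0, norm_zero]
    simp [hnorm]
  have : NeZero d := ⟨hd⟩
  refine (eLpNorm_norm_mul_fourier_arctanA_resDil_le hh (hle.trans_lt hh₀') u).trans ?_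
  gcongr

end
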